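/- The partial order Ω_n generated by the moves vvh → vhv and hhv → hvh is a pre-shelling of the order complex of J(2 × n), whose facets are identified with Dyck paths of length 2n; its restriction function satisfies ρ(r_{Ω_n}(w)) = LS(w), the set of long non-final sequence positions of w. -/

import Mathlib

/-!
Facets of the complex are the chains `chainOf n w` with `w` a Dyck path (`exists_dyck_of_facet`,
`isFacet_chainOf`); the `j`-th ideal of the chain is the `j`-th lattice point of the path, so faces
are compared by comparing the prefix counts `pcnt _ true j`.

A move at a long-sequence position `i` of `w` changes the `i`-th point only (`exists_move`), and
it makes the path turn earlier, so `Ω_n` is contained in the strict lexicographic order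
`TurnLex`, which is in particular well-founded.

For the pre-shelling property it suffices that a facet `u` passing through all the long-sequence
points of `w` satisfies `w ≤ u` (`omega_of_through`). The heart of this is `eq_of_mutual`: two Dyck
paths that pass through the long-sequence points of each other coincide, because where they first
split one of them prolongs a run, and the end of that run is a point of the other. Hence
if `u ≠ w` some long-sequence point of `u` is not on `w`; moving `u` there preserves the hypothesis,
and well-founded induction applies.

For the restriction function, if `u < w` differ in the `i`-th point only and `i` is not a
long-sequence position of `w`, then `w` arises from `u` by a move, contradicting
irreflexivity of `TurnLex` (`mem_LSset_of_differ`).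
-/


open Finset

/-- The `i`-th letter (1-indexed) of a word `w`; `true` = vertical step `v`,
`false` = horizontal step `h`; junk value `false` out of range. -/
def ltr {m : ℕ} (w : Fin m → Bool) (i : ℕ) : Bool :=
  if h : 1 ≤ i ∧ i ≤ m then w ⟨i - 1, by omega⟩ else false

/-- The number of occurrences of the letter `b` among the first `i` letters of `w`. -/
def pcnt {m : ℕ} (w : Fin m → Bool) (b : Bool) (i : ℕ) : ℕ :=
  ((Finset.Icc 1 i).filter fun j => ltr w j = b).card

/-- `w` is a Dyck path of length `2n`: `n` vertical steps and every prefix has at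
least as many `v`'s as `h`'s. -/
def IsDyck (n : ℕ) (w : Fin (2 * n) → Bool) : Prop :=
  pcnt w true (2 * n) = n ∧ ∀ i ≤ 2 * n, pcnt w false i ≤ pcnt w true i

/-- The descent (valley) set of `w`: positions `i` with `w_i = h`, `w_{i+1} = v`. -/
def Des {n : ℕ} (w : Fin (2 * n) → Bool) : Finset ℕ :=
  (Finset.Icc 1 (2 * n - 1)).filter fun i => ltr w i = false ∧ ltr w (i + 1) = true

/-- The set of long non-final sequences of `w`: positions `2 ≤ i ≤ 2n-1` with
`w_{i-1} w_i w_{i+1} = vvh` or `hhv`. -/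
def LSset {n : ℕ} (w : Fin (2 * n) → Bool) : Finset ℕ :=
  (Finset.Icc 2 (2 * n - 1)).filter fun i =>
    ltr w (i - 1) = ltr w i ∧ ltr w i ≠ ltr w (i + 1)

/-- `Move w u` : `u` is obtained from `w` by one (nontrivial) local move replacing
a factor `vvh` by `vhv` or a factor `hhv` by `hvh` at positions `i, i+1, i+2`. -/
def Move {n : ℕ} (w u : Fin (2 * n) → Bool) : Prop :=
  ∃ i : ℕ, 1 ≤ i ∧ i + 2 ≤ 2 * n ∧
    ltr w i = ltr w (i + 1) ∧ ltr w (i + 1) ≠ ltr w (i + 2) ∧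
    ltr u (i + 1) = ltr w (i + 2) ∧ ltr u (i + 2) = ltr w (i + 1) ∧
    ∀ j : ℕ, j ≠ i + 1 → j ≠ i + 2 → ltr u j = ltr w j

/-- The relation `Ω_n`: `u` is below `w` when `u` is obtained from `w` by a
(nonempty) sequence of moves. -/
def OmegaRel {n : ℕ} (u w : Fin (2 * n) → Bool) : Prop :=
  Relation.TransGen (fun a b => Move b a) u w

open scoped Classical

/-- An (abstract) simplicial complex on the vertex set `V`: contains all
singletons and is closed under taking subsets. -/
def IsComplex {V : Type*} (Δ : Set (Finset V)) : Prop :=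
  (∀ x : V, {x} ∈ Δ) ∧ ∀ F ∈ Δ, ∀ G : Finset V, G ⊆ F → G ∈ Δ

/-- A facet: a maximal face. -/
def IsFacet {V : Type*} (Δ : Set (Finset V)) (F : Finset V) : Prop :=
  F ∈ Δ ∧ ∀ G ∈ Δ, F ⊆ G → G = F

/-- A pure complex: all facets have the same cardinality. -/
def IsPure {V : Type*} (Δ : Set (Finset V)) : Prop :=
  ∀ F G : Finset V, IsFacet Δ F → IsFacet Δ G → F.card = G.card

/-- The restriction of a facet `F` with respect to a partial order `lt` on facets:
`r(F) = {x ∈ F : ∃ facet E < F with E ∩ F = F \ {x}}`. -/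
noncomputable def rest {V : Type*} (Δ : Set (Finset V))
    (lt : Finset V → Finset V → Prop) (F : Finset V) : Finset V :=
  F.filter fun x => ∃ E, IsFacet Δ E ∧ lt E F ∧ E ∩ F = F \ {x}

/-- A pre-shelling: a partial order `lt` on the facets such that for all facets
`F, G` with `F` not `≥ G` there are `x ∈ G` and a facet `E < G` with
`F ∩ G ⊆ E ∩ G = G \ {x}`. -/
def IsPreShelling {V : Type*} (Δ : Set (Finset V))
    (lt : Finset V → Finset V → Prop) : Prop :=
  ∀ F G : Finset V, IsFacet Δ F → IsFacet Δ G → ¬(G = F ∨ lt G F) →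
    ∃ x ∈ G, ∃ E, IsFacet Δ E ∧ lt E G ∧ F ∩ G ⊆ E ∩ G ∧ E ∩ G = G \ {x}

/-- A shelling: a linear order on the facets such that whenever `F < G` there are
`x ∈ G` and a facet `E < G` with `F ∩ G ⊆ E ∩ G = G \ {x}`. -/
def IsShelling {V : Type*} (Δ : Set (Finset V))
    (lt : Finset V → Finset V → Prop) : Prop :=
  (∀ F G : Finset V, IsFacet Δ F → IsFacet Δ G → F = G ∨ lt F G ∨ lt G F) ∧
  ∀ F G : Finset V, IsFacet Δ F → IsFacet Δ G → lt F G →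
    ∃ x ∈ G, ∃ E, IsFacet Δ E ∧ lt E G ∧ F ∩ G ⊆ E ∩ G ∧ E ∩ G = G \ {x}

/-- The maximal chain of order ideals of `2 × n` (as lower-set finsets)
associated with a Dyck path `w`: the `j`-th ideal consists of the first
`pcnt w v j` elements of the first chain and the first `pcnt w h j` elements of
the second chain. -/
def chainOf (n : ℕ) (w : Fin (2 * n) → Bool) : Finset (Finset (Fin 2 × Fin n)) :=
  Finset.image (fun j : Fin (2 * n + 1) =>
    Finset.univ.filter (fun p : Fin 2 × Fin n =>
      (p.1 = 0 ∧ p.2.val < pcnt w true j.val) ∨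
      (p.1 = 1 ∧ p.2.val < pcnt w false j.val))) Finset.univ

/-- The order complex of `J(2 × n)`: faces are chains of lower sets of `2 × n`. -/
def orderComplexJ (n : ℕ) : Set (Finset (Finset (Fin 2 × Fin n))) :=
  {A | (∀ I ∈ A, IsLowerSet (↑I : Set (Fin 2 × Fin n))) ∧
       IsChain (· ⊆ ·) (↑A : Set (Finset (Fin 2 × Fin n)))}

/-- The order `Ω_n` transported to the facets of the order complex via the
identification of maximal chains with Dyck paths. -/
def OmegaFacet (n : ℕ) (F G : Finset (Finset (Fin 2 × Fin n))) : Prop :=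
  ∃ u w : Fin (2 * n) → Bool, IsDyck n u ∧ IsDyck n w ∧
    F = chainOf n u ∧ G = chainOf n w ∧ OmegaRel u w

/-! ### Counting letters -/

lemma pcnt_zero {m : ℕ} (w : Fin m → Bool) (b : Bool) : pcnt w b 0 = 0 := by
  simp [pcnt]

lemma pcnt_succ {m : ℕ} (w : Fin m → Bool) (b : Bool) (i : ℕ) :
    pcnt w b (i + 1) = pcnt w b i + if ltr w (i + 1) = b then 1 else 0 := by
  unfold pcnt
  rw [← Finset.insert_Icc_right_eq_Icc_add_one (by omega : 1 ≤ i + 1), Finset.filter_insert]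
  split_ifs with h
  · rw [Finset.card_insert_of_notMem (by simp)]
  · rfl

lemma pcnt_add {m : ℕ} (w : Fin m → Bool) (i : ℕ) : pcnt w true i + pcnt w false i = i := by
  induction i with
  | zero => simp [pcnt_zero]
  | succ i ih =>
    rw [pcnt_succ, pcnt_succ]
    cases ltr w (i + 1) <;> simp <;> omega

lemma pcnt_mono {m : ℕ} (w : Fin m → Bool) (b : Bool) : Monotone (pcnt w b) :=
  monotone_nat_of_le_succ fun i => by rw [pcnt_succ]; omega

lemma isDyck_iff {n : ℕ} (w : Fin (2 * n) → Bool) :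
    IsDyck n w ↔ pcnt w true (2 * n) = n ∧ ∀ i ≤ 2 * n, i ≤ 2 * pcnt w true i := by
  unfold IsDyck
  refine and_congr_right fun _ => forall₂_congr fun i _ => ?_
  have := pcnt_add w i
  omega

lemma IsDyck.true_le {n : ℕ} {w : Fin (2 * n) → Bool} (hw : IsDyck n w) {j : ℕ}
    (hj : j ≤ 2 * n) : pcnt w true j ≤ n :=
  (pcnt_mono w true hj).trans hw.1.le

lemma IsDyck.false_le {n : ℕ} {w : Fin (2 * n) → Bool} (hw : IsDyck n w) {j : ℕ}
    (hj : j ≤ 2 * n) : pcnt w false j ≤ n :=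
  (hw.2 j hj).trans (hw.true_le hj)

lemma ltr_of_not {m : ℕ} (w : Fin m → Bool) {j : ℕ} (h : ¬ (1 ≤ j ∧ j ≤ m)) :
    ltr w j = false := by
  simp [ltr, h]

lemma ext_ltr {m : ℕ} {u w : Fin m → Bool}
    (h : ∀ j, 1 ≤ j → j ≤ m → ltr u j = ltr w j) : u = w := by
  funext k
  have := h (k.val + 1) (by omega) (by omega)
  simpa [ltr, show k.val + 1 ≤ m by omega] using this

lemma ltr_eq_of_pcnt {m : ℕ} {u w : Fin m → Bool} {j : ℕ}
    (h0 : pcnt u true j = pcnt w true j) (h1 : pcnt u true (j + 1) = pcnt w true (j + 1)) :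
    ltr u (j + 1) = ltr w (j + 1) := by
  rw [pcnt_succ, pcnt_succ] at h1
  cases ha : ltr u (j + 1) <;> cases hb : ltr w (j + 1) <;> simp [ha, hb] at h1 ⊢ <;> omega

lemma ext_pcnt {m : ℕ} {u w : Fin m → Bool}
    (h : ∀ j ≤ m, pcnt u true j = pcnt w true j) : u = w := by
  refine ext_ltr fun j h1 hj => ?_
  obtain ⟨k, rfl⟩ : ∃ k, j = k + 1 := ⟨j - 1, by omega⟩
  exact ltr_eq_of_pcnt (h k (by omega)) (h _ hj)

lemma pcnt_congr {m : ℕ} {u w : Fin m → Bool} (b : Bool) {k : ℕ}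
    (h : ∀ j, 1 ≤ j → j ≤ k → ltr u j = ltr w j) : pcnt u b k = pcnt w b k := by
  unfold pcnt
  congr 1
  refine Finset.filter_congr fun j hj => ?_
  rw [Finset.mem_Icc] at hj
  rw [h j hj.1 hj.2]

/-! ### Moves -/

/-- If `u` arises from `w` by exchanging the letters `i` and `i + 1`, the two paths have the same
prefix counts except at position `i`. -/
lemma pcnt_swap {m : ℕ} {u w : Fin m → Bool} {i : ℕ}
    (h1 : ltr u i = ltr w (i + 1)) (h2 : ltr u (i + 1) = ltr w i)
    (h3 : ∀ j, j ≠ i → j ≠ i + 1 → ltr u j = ltr w j) (hi : 1 ≤ i) (j : ℕ) :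
    pcnt u true j + (if j = i ∧ ltr w i = true then 1 else 0) =
      pcnt w true j + (if j = i ∧ ltr w (i + 1) = true then 1 else 0) := by
  induction j with
  | zero => simp [pcnt_zero, show 0 ≠ i by omega]
  | succ j ih =>
    rw [pcnt_succ, pcnt_succ]
    rcases eq_or_ne (j + 1) i with rfl | ha
    · simp only [h1] at *
      simp at ih
      simp
      omega
    · rcases eq_or_ne j i with rfl | hb
      · simp only [h2] at *
        simp at ih
        simp
        omega
      · rw [h3 (j + 1) ha (by omega)]
        simp [ha, hb] at ih ⊢
        omega

/-- Every long non-final sequence position `i` of a Dyck path `w` allows a move, whose result is a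
Dyck path differing from `w` only in its `i`-th point. -/
lemma exists_move {n : ℕ} {w : Fin (2 * n) → Bool} (hw : IsDyck n w) {i : ℕ} (hi : i ∈ LSset w) :
    ∃ u : Fin (2 * n) → Bool, IsDyck n u ∧ Move w u ∧ pcnt u true i ≠ pcnt w true i ∧
      ∀ j, j ≠ i → pcnt u true j = pcnt w true j := by
  simp only [LSset, Finset.mem_filter, Finset.mem_Icc] at hi
  obtain ⟨⟨hi2, hin⟩, he, hne⟩ := hi
  obtain ⟨k, rfl⟩ : ∃ k, i = k + 2 := ⟨i - 2, by omega⟩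
  simp only [show k + 2 - 1 = k + 1 by omega] at he
  let u : Fin (2 * n) → Bool := fun t => if t.val + 1 = k + 2 then ltr w (k + 3)
    else if t.val + 1 = k + 3 then ltr w (k + 2) else w t
  have hu1 : ltr u (k + 2) = ltr w (k + 2 + 1) := by
    rw [ltr, dif_pos (by omega)]; simp [u]
  have hu2 : ltr u (k + 2 + 1) = ltr w (k + 2) := by
    rw [ltr, dif_pos (by omega)]; simp [u]
  have hu3 : ∀ j, j ≠ k + 2 → j ≠ k + 2 + 1 → ltr u j = ltr w j := by
    intro j ha hb
    by_cases hj : 1 ≤ j ∧ j ≤ 2 * n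
    · rw [ltr, ltr, dif_pos hj, dif_pos hj]
      simp only [u]
      rw [if_neg (by omega), if_neg (by omega)]
    · rw [ltr_of_not _ hj, ltr_of_not _ hj]
  have hs := pcnt_swap hu1 hu2 hu3 (by omega)
  have hs' : ∀ j, j ≠ k + 2 → pcnt u true j = pcnt w true j := by
    intro j hj
    simpa [hj] using hs j
  have hsi := hs (k + 2)
  have hw' := (isDyck_iff w).1 hw
  refine ⟨u, (isDyck_iff u).2 ⟨?_, ?_⟩, ⟨k + 1, by omega, by omega, he, hne, hu1, hu2, hu3⟩,
    ?_, hs'⟩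
  · rw [hs' _ (by omega)]; exact hw'.1
  · intro j hj
    rcases eq_or_ne j (k + 2) with rfl | hjk
    · -- lowering a peak `vvh` keeps the path weakly above the diagonal because of the first `v`
      have a0 := hw'.2 k (by omega)
      have a2 := hw'.2 (k + 2) hj
      have e1 := pcnt_succ w true k
      have e2 := pcnt_succ w true (k + 1)
      rw [he] at e1
      simp only [show k + 1 + 1 = k + 2 by omega] at e2
      cases hb : ltr w (k + 2) <;> cases hc : ltr w (k + 2 + 1) <;>
        simp [hb, hc] at hsi e1 e2 hne <;> omega
    · rw [hs' _ hjk]; exact hw'.2 j hj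
  · cases hb : ltr w (k + 2) <;> cases hc : ltr w (k + 2 + 1) <;>
      simp [hb, hc] at hsi hne <;> omega

/-- Lexicographic comparison of the sequences of changes of direction: `u` is below `w` if at the
first position where the two words split, `u` turns and `w` goes straight on. -/
def TurnLex {m : ℕ} (u w : Fin m → Bool) : Prop :=
  ∃ i, 1 ≤ i ∧ (∀ j ≤ i, ltr u j = ltr w j) ∧ ltr w (i + 1) = ltr w i ∧ ltr u (i + 1) ≠ ltr u i

lemma TurnLex.trans {m : ℕ} {u w x : Fin m → Bool} (h : TurnLex u w) (h' : TurnLex w x) :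
    TurnLex u x := by
  obtain ⟨i, hi, ha, hb, hc⟩ := h
  obtain ⟨j, hj, ha', hb', hc'⟩ := h'
  rcases lt_trichotomy i j with hij | rfl | hij
  · refine ⟨i, hi, fun k hk => (ha k hk).trans (ha' k (by omega)), ?_, hc⟩
    rw [← ha' _ (by omega), ← ha' _ (by omega), hb]
  · exact absurd hb hc'
  · refine ⟨j, hj, fun k hk => (ha k (by omega)).trans (ha' k hk), hb', ?_⟩
    rw [ha _ (by omega), ha _ (by omega)]
    exact hc'

lemma TurnLex.irrefl {m : ℕ} (w : Fin m → Bool) : ¬ TurnLex w w :=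
  fun ⟨_, _, _, hb, hc⟩ => hc hb

lemma Move.turnLex {n : ℕ} {w u : Fin (2 * n) → Bool} (h : Move w u) : TurnLex u w := by
  obtain ⟨i, hi, _, h1, h2, h3, _, h5⟩ := h
  refine ⟨i, hi, fun j hj => h5 j (by omega) (by omega), h1.symm, ?_⟩
  rw [h3, h5 i (by omega) (by omega), h1]
  exact h2.symm

lemma OmegaRel.turnLex {n : ℕ} {u w : Fin (2 * n) → Bool} (h : OmegaRel u w) : TurnLex u w := by
  unfold OmegaRel at h
  induction h with
  | single h => exact Move.turnLex h
  | tail _ h ih => exact ih.trans (Move.turnLex h)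

/-! ### Paths through the long-sequence points of one another -/

/-- If `u` passes through all long-sequence points of `w` and shares its `k`-th point, and `w` goes
straight on there, then `u` takes the same step: the run of `w` ends in a long-sequence point or the
common endpoint, and `u` has to follow that run to reach it. -/
lemma no_turn {n : ℕ} {u w : Fin (2 * n) → Bool} (hu : IsDyck n u) (hw : IsDyck n w)
    (h : ∀ i ∈ LSset w, pcnt u true i = pcnt w true i) {k : ℕ} (hk : 1 ≤ k) (hkn : k + 1 ≤ 2 * n)
    (hc : pcnt u true k = pcnt w true k) (hw1 : ltr w (k + 1) = ltr w k) :
    ltr u (k + 1) = ltr w (k + 1) := by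
  by_contra hne
  -- the last position `e` of the run of `w` through `k` and `k + 1`
  have hex : ∃ e, k + 1 ≤ e ∧ (e = 2 * n ∨ ltr w (e + 1) ≠ ltr w k) := ⟨2 * n, hkn, Or.inl rfl⟩
  obtain ⟨hke, hend⟩ := Nat.find_spec hex
  have hmin := fun j => @Nat.find_min _ _ hex j
  have hle : Nat.find hex ≤ 2 * n := Nat.find_min' hex ⟨hkn, Or.inl rfl⟩
  generalize Nat.find hex = e at *
  have hrun : ∀ j, k ≤ j → j ≤ e → ltr w j = ltr w k := by
    intro j hj
    induction j, hj using Nat.le_induction with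
    | base => intro _; rfl
    | succ j hj ih =>
      intro hje
      rcases eq_or_ne j k with rfl | hjk
      · exact hw1
      · by_contra hcon
        exact hmin j (by omega) ⟨by omega, Or.inr hcon⟩
  have hce : pcnt u true e = pcnt w true e := by
    rcases eq_or_ne e (2 * n) with rfl | hen
    · rw [hu.1, hw.1]
    · refine h e ?_
      have hend := hend.resolve_left hen
      simp only [LSset, Finset.mem_filter, Finset.mem_Icc]
      refine ⟨by omega, ?_, ?_⟩
      · rw [hrun e (by omega) le_rfl, hrun (e - 1) (by omega) (by omega)]
      · rw [hrun e (by omega) le_rfl]; exact hend.symm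
  -- along the run, `u` collects strictly fewer letters `ltr w k` than `w`
  have hlag : ∀ j, k + 1 ≤ j → j ≤ e →
      if ltr w k = true then pcnt u true j < pcnt w true j
      else pcnt w true j < pcnt u true j := by
    intro j hj
    induction j, hj using Nat.le_induction with
    | base =>
      intro _
      rw [pcnt_succ, pcnt_succ, hc]
      rw [hw1] at hne ⊢
      cases ha : ltr w k <;> cases hb : ltr u (k + 1) <;> simp_all
    | succ j hj ih =>
      intro hje
      have ih := ih (by omega)
      rw [pcnt_succ, pcnt_succ, hrun (j + 1) (by omega) hje]
      cases ha : ltr w k <;> cases hb : ltr u (j + 1) <;> simp [ha] at ih ⊢ <;> omega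
  have := hlag e hke le_rfl
  split_ifs at this <;> omega

lemma ltr_one {n : ℕ} {w : Fin (2 * n) → Bool} (hw : IsDyck n w) (hn : 1 ≤ 2 * n) :
    ltr w 1 = true := by
  have := ((isDyck_iff w).1 hw).2 1 hn
  have h2 := pcnt_succ w true 0
  rw [pcnt_zero] at h2
  by_contra hcon
  simp [hcon] at h2
  omega

/-- Two Dyck paths, each passing through the long-sequence points of the other, are equal. -/
lemma eq_of_mutual {n : ℕ} {u w : Fin (2 * n) → Bool} (hu : IsDyck n u) (hw : IsDyck n w)
    (h : ∀ i ∈ LSset w, pcnt u true i = pcnt w true i)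
    (h' : ∀ i ∈ LSset u, pcnt u true i = pcnt w true i) : u = w := by
  refine ext_ltr fun j => ?_
  induction j using Nat.strong_induction_on with
  | _ j ih =>
    intro h1 hj
    rcases eq_or_ne j 1 with rfl | hj1
    · rw [ltr_one hu hj, ltr_one hw hj]
    obtain ⟨k, rfl⟩ : ∃ k, j = k + 1 := ⟨j - 1, by omega⟩
    have hc : pcnt u true k = pcnt w true k :=
      pcnt_congr true fun j ha hb => ih j (by omega) ha (by omega)
    by_cases hw1 : ltr w (k + 1) = ltr w k
    · exact no_turn hu hw h (by omega) hj hc hw1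
    by_cases hu1 : ltr u (k + 1) = ltr u k
    · exact (no_turn hw hu (fun i hi => (h' i hi).symm) (by omega) hj hc.symm hu1).symm
    have := ih k (by omega) (by omega) (by omega)
    rw [this] at hu1
    cases ha : ltr w (k + 1) <;> cases hb : ltr w k <;> cases hc : ltr u (k + 1) <;> simp_all

/-- If `u` passes through all long-sequence points of `w`, then `w ≤ u` in `Ω_n`: as long as
`u ≠ w`, some long-sequence point of `u` is not on `w`, and the move there keeps all the
points that `u` shares with `w`. -/
lemma omega_of_through {n : ℕ} {u w : Fin (2 * n) → Bool} (hu : IsDyck n u) (hw : IsDyck n w)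
    (h : ∀ i ∈ LSset w, pcnt u true i = pcnt w true i) : w = u ∨ OmegaRel w u := by
  have _ht : IsTrans (Fin (2 * n) → Bool) TurnLex := ⟨fun _ _ _ => TurnLex.trans⟩
  have _hirr : Std.Irrefl (α := Fin (2 * n) → Bool) TurnLex := ⟨TurnLex.irrefl⟩
  have wf : WellFounded (TurnLex (m := 2 * n)) := Finite.wellFounded_of_trans_of_irrefl _
  induction u using wf.induction with
  | _ u ih =>
    by_cases h' : ∀ i ∈ LSset u, pcnt u true i = pcnt w true i
    · exact Or.inl (eq_of_mutual hu hw h h').symm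
    push Not at h'
    obtain ⟨i, hi, hne⟩ := h'
    obtain ⟨u', hu', hm, -, hs⟩ := exists_move hu hi
    have key : ∀ j ∈ LSset w, pcnt u' true j = pcnt w true j := by
      intro j hj
      have hji : j ≠ i := by rintro rfl; exact hne (h _ hj)
      rw [hs j hji, h j hj]
    right
    rcases ih u' hm.turnLex hu' key with rfl | hlt
    · exact Relation.TransGen.single hm
    · exact Relation.TransGen.tail hlt hm

/-! ### Order ideals of `2 × n` -/

/-- The subset of `2 × n` made of the first `a` elements of the first chain and the first `b`
elements of the second one. -/
def idl (n a b : ℕ) : Finset (Fin 2 × Fin n) :=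
  Finset.univ.filter fun p => (p.1 = 0 ∧ p.2.val < a) ∨ (p.1 = 1 ∧ p.2.val < b)

/-- The `r`-th row of a subset of `2 × n`. -/
def row {n : ℕ} (r : Fin 2) (I : Finset (Fin 2 × Fin n)) : Finset (Fin n) :=
  Finset.univ.filter fun k => (r, k) ∈ I

lemma card_eq_rows {n : ℕ} (I : Finset (Fin 2 × Fin n)) :
    I.card = (row 0 I).card + (row 1 I).card := by
  rw [Finset.card_eq_sum_card_fiberwise (f := Prod.fst) (t := Finset.univ) (by simp),
    Fin.sum_univ_two]
  have : ∀ r : Fin 2, (I.filter fun p => p.1 = r) = (row r I).image (fun k => (r, k)) := by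
    intro r
    ext ⟨a, b⟩
    simp only [row, Finset.mem_filter, Finset.mem_image, Finset.mem_univ, true_and, Prod.mk.injEq]
    constructor
    · rintro ⟨h, rfl⟩; exact ⟨b, h, rfl, rfl⟩
    · rintro ⟨k, h, rfl, rfl⟩; exact ⟨h, rfl⟩
  rw [this, this, Finset.card_image_of_injective _ (Prod.mk_right_injective _),
    Finset.card_image_of_injective _ (Prod.mk_right_injective _)]

lemma card_filter_lt {n a : ℕ} (ha : a ≤ n) :
    (Finset.univ.filter fun k : Fin n => k.val < a).card = a := by
  rw [Fin.card_filter_val_lt, min_eq_right ha]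

lemma card_idl {n a b : ℕ} (ha : a ≤ n) (hb : b ≤ n) : (idl n a b).card = a + b := by
  rw [card_eq_rows]
  have h0 : row 0 (idl n a b) = Finset.univ.filter fun k : Fin n => k.val < a := by
    ext k; simp [row, idl]
  have h1 : row 1 (idl n a b) = Finset.univ.filter fun k : Fin n => k.val < b := by
    ext k; simp [row, idl]
  rw [h0, h1, card_filter_lt ha, card_filter_lt hb]

lemma card_row_zero_idl {n a b : ℕ} (ha : a ≤ n) : (row 0 (idl n a b)).card = a := by
  have h0 : row 0 (idl n a b) = Finset.univ.filter fun k : Fin n => k.val < a := by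
    ext k; simp [row, idl]
  rw [h0, card_filter_lt ha]

lemma idl_lower {n a b : ℕ} (hba : b ≤ a) :
    IsLowerSet (↑(idl n a b) : Set (Fin 2 × Fin n)) := by
  rintro ⟨r, k⟩ ⟨r', k'⟩ hle hmem
  obtain ⟨h1, h2⟩ := Prod.mk_le_mk.1 hle
  simp only [idl, Finset.coe_filter, Finset.mem_univ, true_and, Set.mem_ofPred_eq] at hmem ⊢
  have h2 : k'.val ≤ k.val := h2
  fin_cases r <;> fin_cases r' <;> simp at h1 hmem ⊢ <;> omega

lemma idl_mono {n a b a' b' : ℕ} (ha : a ≤ a') (hb : b ≤ b') : idl n a b ⊆ idl n a' b' := by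
  intro p hp
  simp only [idl, Finset.mem_filter, Finset.mem_univ, true_and] at hp ⊢
  omega

lemma mem_lower_fin {n : ℕ} {S : Finset (Fin n)} (hS : IsLowerSet (↑S : Set (Fin n))) (k : Fin n) :
    k ∈ S ↔ k.val < S.card := by
  constructor
  · intro hk
    have : Finset.Iic k ⊆ S := fun j hj => hS (Finset.mem_Iic.1 hj) hk
    have := Finset.card_le_card this
    rw [Fin.card_Iic] at this
    omega
  · intro hk
    by_contra hcon
    have : S ⊆ Finset.Iio k := by
      intro j hj
      rw [Finset.mem_Iio]
      by_contra hjk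
      exact hcon (hS (not_lt.1 hjk) hj)
    have := Finset.card_le_card this
    rw [Fin.card_Iio] at this
    omega

lemma row_lower {n : ℕ} {I : Finset (Fin 2 × Fin n)} (hI : IsLowerSet (↑I : Set (Fin 2 × Fin n)))
    (r : Fin 2) : IsLowerSet (↑(row r I) : Set (Fin n)) := by
  intro a b hab ha
  simp only [row, Finset.coe_filter, Finset.mem_univ, true_and, Set.mem_ofPred_eq] at ha ⊢
  exact hI (Prod.mk_le_mk.2 ⟨le_rfl, hab⟩) ha

lemma eq_idl {n : ℕ} {I : Finset (Fin 2 × Fin n)} (hI : IsLowerSet (↑I : Set (Fin 2 × Fin n))) :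
    I = idl n (row 0 I).card (row 1 I).card := by
  ext ⟨r, k⟩
  have h : ∀ r : Fin 2, (r, k) ∈ I ↔ k.val < (row r I).card := fun r => by
    rw [← mem_lower_fin (row_lower hI r)]; simp [row]
  rw [h r]
  fin_cases r <;> simp [idl]

lemma row_one_le {n : ℕ} {I : Finset (Fin 2 × Fin n)}
    (hI : IsLowerSet (↑I : Set (Fin 2 × Fin n))) : (row 1 I).card ≤ (row 0 I).card := by
  refine Finset.card_le_card fun k hk => ?_
  simp only [row, Finset.mem_filter, Finset.mem_univ, true_and] at hk ⊢
  exact hI (Prod.mk_le_mk.2 ⟨by simp, le_rfl⟩) hk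

lemma row_card_mono {n : ℕ} {I J : Finset (Fin 2 × Fin n)} (h : I ⊆ J) (r : Fin 2) :
    (row r I).card ≤ (row r J).card :=
  Finset.card_le_card (Finset.monotone_filter_right _ fun _ _ hk => h hk)

/-! ### Facets are the chains of Dyck paths -/

/-- The `j`-th ideal of the chain associated with the path `w`. -/
def pt (n : ℕ) (w : Fin (2 * n) → Bool) (j : ℕ) : Finset (Fin 2 × Fin n) :=
  idl n (pcnt w true j) (pcnt w false j)

lemma mem_chainOf {n : ℕ} {w : Fin (2 * n) → Bool} {x : Finset (Fin 2 × Fin n)} :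
    x ∈ chainOf n w ↔ ∃ j ≤ 2 * n, x = pt n w j := by
  simp only [chainOf, Finset.mem_image, Finset.mem_univ, true_and]
  constructor
  · rintro ⟨j, rfl⟩; exact ⟨j.val, by omega, rfl⟩
  · rintro ⟨j, hj, rfl⟩; exact ⟨⟨j, by omega⟩, rfl⟩

lemma card_pt {n : ℕ} {w : Fin (2 * n) → Bool} (hw : IsDyck n w) {j : ℕ} (hj : j ≤ 2 * n) :
    (pt n w j).card = j := by
  rw [pt, card_idl (hw.true_le hj) (hw.false_le hj), pcnt_add]

lemma pt_eq_iff {n : ℕ} {u w : Fin (2 * n) → Bool} (hu : IsDyck n u) (hw : IsDyck n w) {j : ℕ}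
    (hj : j ≤ 2 * n) : pt n u j = pt n w j ↔ pcnt u true j = pcnt w true j := by
  constructor
  · intro h
    have := congrArg (fun I => (row 0 I).card) h
    simpa [pt, card_row_zero_idl (hu.true_le hj), card_row_zero_idl (hw.true_le hj)] using this
  · intro h
    have h1 := pcnt_add u j
    have h2 := pcnt_add w j
    rw [pt, pt, h, show pcnt u false j = pcnt w false j by omega]

lemma pt_mem_chainOf {n : ℕ} {u w : Fin (2 * n) → Bool} (hu : IsDyck n u) (hw : IsDyck n w) {j : ℕ}
    (hj : j ≤ 2 * n) : pt n u j ∈ chainOf n w ↔ pcnt u true j = pcnt w true j := by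
  rw [mem_chainOf, ← pt_eq_iff hu hw hj]
  constructor
  · rintro ⟨k, hk, h⟩
    have := congrArg Finset.card h
    rw [card_pt hu hj, card_pt hw hk] at this
    rwa [← this] at h
  · intro h; exact ⟨j, hj, h⟩

lemma chainOf_injective {n : ℕ} {u w : Fin (2 * n) → Bool} (hu : IsDyck n u) (hw : IsDyck n w)
    (h : chainOf n u = chainOf n w) : u = w :=
  ext_pcnt fun j hj => (pt_mem_chainOf hu hw hj).1 (h ▸ mem_chainOf.2 ⟨j, hj, rfl⟩)

lemma card_le_two_mul {n : ℕ} (I : Finset (Fin 2 × Fin n)) : I.card ≤ 2 * n := by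
  simpa using Finset.card_le_univ I

lemma eq_of_chain {n : ℕ} {A : Finset (Finset (Fin 2 × Fin n))}
    (hA : IsChain (· ⊆ ·) (↑A : Set (Finset (Fin 2 × Fin n)))) {I J : Finset (Fin 2 × Fin n)}
    (hI : I ∈ A) (hJ : J ∈ A) (h : I.card = J.card) : I = J := by
  rcases hA.total hI hJ with h' | h'
  · exact Finset.eq_of_subset_of_card_le h' h.ge
  · exact (Finset.eq_of_subset_of_card_le h' h.le).symm

lemma isFacet_chainOf {n : ℕ} {w : Fin (2 * n) → Bool} (hw : IsDyck n w) :
    IsFacet (orderComplexJ n) (chainOf n w) := by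
  refine ⟨⟨?_, ?_⟩, ?_⟩
  · intro I hI
    obtain ⟨j, hj, rfl⟩ := mem_chainOf.1 hI
    exact idl_lower (hw.2 j hj)
  · intro I hI J hJ _
    obtain ⟨j, hj, rfl⟩ := mem_chainOf.1 hI
    obtain ⟨k, hk, rfl⟩ := mem_chainOf.1 hJ
    rcases le_total j k with h | h
    · exact Or.inl (idl_mono (pcnt_mono _ _ h) (pcnt_mono _ _ h))
    · exact Or.inr (idl_mono (pcnt_mono _ _ h) (pcnt_mono _ _ h))
  · rintro G ⟨_, hG⟩ hsub
    refine Finset.Subset.antisymm (fun J hJ => ?_) hsub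
    have hc := card_le_two_mul J
    have hp : pt n w J.card ∈ chainOf n w := mem_chainOf.2 ⟨_, hc, rfl⟩
    rwa [eq_of_chain hG hJ (hsub hp) (card_pt hw hc).symm]

/-- A lower set comparable with all members of a facet belongs to the facet. -/
lemma mem_facet {n : ℕ} {F : Finset (Finset (Fin 2 × Fin n))} (hF : IsFacet (orderComplexJ n) F)
    {I : Finset (Fin 2 × Fin n)} (hI : IsLowerSet (↑I : Set (Fin 2 × Fin n)))
    (hc : ∀ J ∈ F, I ⊆ J ∨ J ⊆ I) : I ∈ F := by
  have : insert I F ∈ orderComplexJ n := by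
    refine ⟨?_, ?_⟩
    · intro J hJ
      rcases Finset.mem_insert.1 hJ with rfl | hJ
      · exact hI
      · exact hF.1.1 J hJ
    · rw [Finset.coe_insert]
      exact hF.1.2.insert fun J hJ _ => hc J hJ
  rw [← hF.2 _ this (Finset.subset_insert _ _)]
  exact Finset.mem_insert_self _ _

/-- A facet contains an ideal of every rank: between an ideal `I` of the facet and
the next larger one `K`, adding to `I` a minimal element of `K \ I` gives an ideal comparable with
the whole facet. -/
lemma facet_rank {n : ℕ} {F : Finset (Finset (Fin 2 × Fin n))}
    (hF : IsFacet (orderComplexJ n) F) (j : ℕ) (hj : j ≤ 2 * n) : ∃ I ∈ F, I.card = j := by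
  induction j with
  | zero => exact ⟨∅, mem_facet hF (by simp [IsLowerSet]) (by simp), rfl⟩
  | succ j ih =>
    obtain ⟨I, hI, hIc⟩ := ih (by omega)
    have huniv : Finset.univ ∈ F := mem_facet hF (by simpa using isLowerSet_univ) (by simp)
    obtain ⟨K, hK, hKmin⟩ := Finset.exists_min_image (F.filter fun K => j < K.card) Finset.card
      ⟨Finset.univ, by simp [huniv]; omega⟩
    rw [Finset.mem_filter] at hK
    have hIK : I ⊆ K := by
      rcases hF.1.2.total hI hK.1 with h | h
      · exact h
      · have := Finset.card_le_card h
        omega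
    have hne : (K \ I).Nonempty := by
      rw [← Finset.card_pos, Finset.card_sdiff_of_subset hIK]; omega
    obtain ⟨x, hx⟩ := Finset.exists_minimal hne
    have hxm := Finset.mem_sdiff.1 hx.prop
    refine ⟨insert x I, mem_facet hF ?_ ?_, by rw [Finset.card_insert_of_notMem hxm.2, hIc]⟩
    · intro a b hba ha
      rw [Finset.mem_coe, Finset.mem_insert] at ha ⊢
      rcases ha with rfl | ha
      · by_contra hcon
        push Not at hcon
        have hbK : b ∈ K := hF.1.1 K hK.1 hba hxm.1
        exact hcon.1 (le_antisymm hba (hx.le_of_le (Finset.mem_sdiff.2 ⟨hbK, hcon.2⟩) hba))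
      · exact Or.inr (hF.1.1 I hI hba ha)
    · intro J hJ
      by_cases hJc : j < J.card
      · left
        have hKJ : K ⊆ J := by
          rcases hF.1.2.total hK.1 hJ with h | h
          · exact h
          · exact (Finset.eq_of_subset_of_card_le h
              (hKmin J (Finset.mem_filter.2 ⟨hJ, hJc⟩))).ge
        exact Finset.insert_subset (hKJ hxm.1) (hIK.trans hKJ)
      · right
        have hJI : J ⊆ I := by
          rcases hF.1.2.total hI hJ with h | h
          · exact (Finset.eq_of_subset_of_card_le h (by omega)).ge
          · exact h
        exact hJI.trans (Finset.subset_insert _ _)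

lemma exists_dyck_of_facet {n : ℕ} {F : Finset (Finset (Fin 2 × Fin n))}
    (hF : IsFacet (orderComplexJ n) F) : ∃ w, IsDyck n w ∧ F = chainOf n w := by
  choose! I hI hIc using facet_rank hF
  have hlow : ∀ j ≤ 2 * n, IsLowerSet (↑(I j) : Set (Fin 2 × Fin n)) :=
    fun j hj => hF.1.1 _ (hI j hj)
  have hsum : ∀ j ≤ 2 * n, (row 0 (I j)).card + (row 1 (I j)).card = j := fun j hj => by
    rw [← card_eq_rows, hIc j hj]
  have hmono : ∀ j, j + 1 ≤ 2 * n → I j ⊆ I (j + 1) := by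
    intro j hj
    rcases hF.1.2.total (hI j (by omega)) (hI (j + 1) hj) with h | h
    · exact h
    · have := Finset.card_le_card h
      rw [hIc j (by omega), hIc _ hj] at this
      omega
  -- the letter is `v` exactly when the ideal grows in the first row
  let w : Fin (2 * n) → Bool := fun k =>
    decide ((row 0 (I k.val)).card < (row 0 (I (k.val + 1))).card)
  have hcount : ∀ j ≤ 2 * n, pcnt w true j = (row 0 (I j)).card := by
    intro j hj
    induction j with
    | zero => have := hsum 0 hj; rw [pcnt_zero]; omega
    | succ j ih =>
      have hl : ltr w (j + 1) =
          decide ((row 0 (I j)).card < (row 0 (I (j + 1))).card) := by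
        rw [ltr, dif_pos (by omega)]; simp [w]
      have s1 := hsum j (by omega)
      have s2 := hsum (j + 1) hj
      have m0 := row_card_mono (hmono j hj) 0
      have m1 := row_card_mono (hmono j hj) 1
      rw [pcnt_succ, ih (by omega), hl]
      simp only [decide_eq_true_eq]
      split_ifs <;> omega
  have hcount' : ∀ j ≤ 2 * n, pcnt w false j = (row 1 (I j)).card := by
    intro j hj
    have := pcnt_add w j
    have := hsum j hj
    have := hcount j hj
    omega
  have hw : IsDyck n w := by
    refine ⟨?_, ?_⟩
    · rw [hcount _ le_rfl]
      have h0 := Finset.card_le_univ (row 0 (I (2 * n)))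
      have h1 := Finset.card_le_univ (row 1 (I (2 * n)))
      have := hsum _ le_rfl
      rw [Fintype.card_fin] at h0 h1
      omega
    · intro j hj
      rw [hcount j hj, hcount' j hj]
      exact row_one_le (hlow j hj)
  refine ⟨w, hw, (isFacet_chainOf hw).2 F hF.1 fun x hx => ?_⟩
  obtain ⟨j, hj, rfl⟩ := mem_chainOf.1 hx
  rw [pt, hcount j hj, hcount' j hj, ← eq_idl (hlow j hj)]
  exact hI j hj

/-! ### The pre-shelling and its restriction function -/

/-- Membership form of the exchange condition; stated over an arbitrary vertex type so
that the decidability instances are those of `rest` and `IsPreShelling`. -/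
lemma inter_eq_sdiff_iff {V : Type*} {E G : Finset V} {x : V} :
    E ∩ G = G \ {x} ↔ ∀ y ∈ G, (y ∈ E ↔ y ≠ x) := by
  rw [Finset.ext_iff]
  refine forall_congr' fun y => ?_
  rw [Finset.mem_inter, Finset.mem_sdiff, Finset.mem_singleton]
  tauto

lemma inter_subset_inter_iff {V : Type*} {E F G : Finset V} :
    F ∩ G ⊆ E ∩ G ↔ ∀ y ∈ G, y ∈ F → y ∈ E := by
  refine forall_congr' fun y => ?_
  rw [Finset.mem_inter, Finset.mem_inter]
  tauto

lemma mem_iff_of_differ {n : ℕ} {u w : Fin (2 * n) → Bool} (hu : IsDyck n u) (hw : IsDyck n w)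
    {i : ℕ} (hi : i ≤ 2 * n) (hne : pcnt u true i ≠ pcnt w true i)
    (hs : ∀ j, j ≠ i → pcnt u true j = pcnt w true j) :
    ∀ x ∈ chainOf n w, (x ∈ chainOf n u ↔ x ≠ pt n w i) := by
  intro x hx
  obtain ⟨j, hj, rfl⟩ := mem_chainOf.1 hx
  rw [pt_mem_chainOf hw hu hj]
  constructor
  · intro h h'
    have := congrArg Finset.card h'
    rw [card_pt hw hj, card_pt hw hi] at this
    exact hne (this ▸ h.symm)
  · intro h
    exact (hs j (by rintro rfl; exact h rfl)).symm

/-- If `u < w` in `Ω_n` and the two paths differ in the `i`-th point only, then `i` is the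
end of a long sequence of `w`; otherwise `w` would arise from `u` by a move. -/
lemma mem_LSset_of_differ {n : ℕ} {u w : Fin (2 * n) → Bool} (hu : IsDyck n u) (hw : IsDyck n w)
    (hlt : OmegaRel u w) {i : ℕ} (hi : i ≤ 2 * n) (hne : pcnt u true i ≠ pcnt w true i)
    (hs : ∀ j ≤ 2 * n, j ≠ i → pcnt u true j = pcnt w true j) : i ∈ LSset w := by
  have hi0 : i ≠ 0 := by rintro rfl; exact hne (by rw [pcnt_zero, pcnt_zero])
  have hi2 : i ≠ 2 * n := by rintro rfl; exact hne (by rw [hu.1, hw.1])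
  have hi1 : i ≠ 1 := by
    rintro rfl
    exact hne (pcnt_congr true fun j ha hb => by
      obtain rfl : j = 1 := by omega
      rw [ltr_one hu hi, ltr_one hw hi])
  obtain ⟨k, rfl⟩ : ∃ k, i = k + 2 := ⟨i - 2, by omega⟩
  have c1 := hs (k + 1) (by omega) (by omega)
  have c3 := hs (k + 3) (by omega) (by omega)
  have eu2 := pcnt_succ u true (k + 1)
  have ew2 := pcnt_succ w true (k + 1)
  have eu3 := pcnt_succ u true (k + 2)
  have ew3 := pcnt_succ w true (k + 2)
  simp only [show k + 1 + 1 = k + 2 by omega, show k + 2 + 1 = k + 3 by omega] at eu2 ew2 eu3 ew3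
  have hswap : ltr w (k + 2) ≠ ltr w (k + 3) ∧ ltr u (k + 2) = ltr w (k + 3) ∧
      ltr u (k + 3) = ltr w (k + 2) := by
    cases h1 : ltr w (k + 2) <;> cases h2 : ltr w (k + 3) <;> cases h3 : ltr u (k + 2) <;>
      cases h4 : ltr u (k + 3) <;> simp [h1, h2, h3, h4] at eu2 ew2 eu3 ew3 ⊢ <;> omega
  obtain ⟨hd, hu2, hu3⟩ := hswap
  have hrest : ∀ j, j ≠ k + 2 → j ≠ k + 3 → ltr w j = ltr u j := by
    intro j ha hb
    by_cases hj : 1 ≤ j ∧ j ≤ 2 * n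
    · obtain ⟨l, rfl⟩ : ∃ l, j = l + 1 := ⟨j - 1, by omega⟩
      exact (ltr_eq_of_pcnt (hs l (by omega) (by omega)) (hs _ hj.2 (by omega))).symm
    · rw [ltr_of_not _ hj, ltr_of_not _ hj]
  simp only [LSset, Finset.mem_filter, Finset.mem_Icc]
  refine ⟨by omega, ?_, hd⟩
  by_contra hcon
  simp only [show k + 2 - 1 = k + 1 by omega] at hcon
  have hm : Move u w := by
    refine ⟨k + 1, by omega, by omega, ?_, ?_, hu3.symm, hu2.symm, hrest⟩
    · show ltr u (k + 1) = ltr u (k + 2)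
      rw [← hrest (k + 1) (by omega) (by omega), hu2]
      cases h1 : ltr w (k + 1) <;> cases h2 : ltr w (k + 2) <;> cases h3 : ltr w (k + 3) <;>
        simp_all
    · show ltr u (k + 2) ≠ ltr u (k + 3)
      rw [hu2, hu3]; exact hd.symm
  exact TurnLex.irrefl _ (hlt.turnLex.trans hm.turnLex)

/-- The partial order `Ω_n` is a pre-shelling of the order complex of `J(2 × n)`
(whose facets are identified with Dyck paths of length `2n` via `chainOf`), and
its restriction function satisfies `ρ(r(w)) = LS(w)`, the set of long non-final
sequences, where the rank `ρ` of an ideal is its cardinality. -/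
theorem omega_isPreShelling (n : ℕ) (hn : 1 ≤ n) :
    IsPreShelling (orderComplexJ n) (OmegaFacet n) ∧
    ∀ w : Fin (2 * n) → Bool, IsDyck n w →
      (rest (orderComplexJ n) (OmegaFacet n) (chainOf n w)).image Finset.card =
        LSset w := by
  have hLS : ∀ {w : Fin (2 * n) → Bool} {i : ℕ}, i ∈ LSset w → i ≤ 2 * n := by
    intro w i hi
    simp only [LSset, Finset.mem_filter, Finset.mem_Icc] at hi
    omega
  constructor
  · intro F G hF hG hFG
    obtain ⟨u, hu, rfl⟩ := exists_dyck_of_facet hF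
    obtain ⟨w, hw, rfl⟩ := exists_dyck_of_facet hG
    obtain ⟨i, hi, hne⟩ : ∃ i ∈ LSset w, pcnt u true i ≠ pcnt w true i := by
      by_contra! hcon
      rcases omega_of_through hu hw hcon with rfl | h
      · exact hFG (Or.inl rfl)
      · exact hFG (Or.inr ⟨w, u, hw, hu, rfl, rfl, h⟩)
    obtain ⟨v, hv, hm, hvne, hvs⟩ := exists_move hw hi
    have hint := mem_iff_of_differ hv hw (hLS hi) hvne hvs
    refine ⟨pt n w i, mem_chainOf.2 ⟨i, hLS hi, rfl⟩, chainOf n v, isFacet_chainOf hv,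
      ⟨v, w, hv, hw, rfl, rfl, Relation.TransGen.single hm⟩, inter_subset_inter_iff.2 ?_,
      inter_eq_sdiff_iff.2 hint⟩
    intro x hxw hxu
    refine (hint x hxw).2 ?_
    rintro rfl
    exact hne ((pt_mem_chainOf hw hu (hLS hi)).1 hxu).symm
  · intro w hw
    ext i
    simp only [Finset.mem_image, rest, Finset.mem_filter]
    constructor
    · rintro ⟨x, ⟨hx, E, -, ⟨u, w', hu, hw', rfl, hww, hlt⟩, hE⟩, rfl⟩
      obtain rfl := chainOf_injective hw hw' hww
      obtain ⟨i, hi, rfl⟩ := mem_chainOf.1 hx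
      rw [card_pt hw hi]
      have hE' : ∀ j ≤ 2 * n, pcnt u true j = pcnt w true j ↔ j ≠ i := by
        intro j hj
        have hjm : pt n w j ∈ chainOf n w := mem_chainOf.2 ⟨j, hj, rfl⟩
        have h := inter_eq_sdiff_iff.1 hE (pt n w j) hjm
        rw [pt_mem_chainOf hw hu hj, eq_comm] at h
        have hji : pt n w j = pt n w i ↔ j = i :=
          ⟨fun h => by rw [← card_pt hw hj, h, card_pt hw hi], fun h => h ▸ rfl⟩
        rw [h, Ne, hji]
      exact mem_LSset_of_differ hu hw hlt hi (fun h => (hE' i hi).1 h rfl)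
        fun j hj hji => (hE' j hj).2 hji
    · intro hi
      obtain ⟨v, hv, hm, hvne, hvs⟩ := exists_move hw hi
      have hint := mem_iff_of_differ hv hw (hLS hi) hvne hvs
      exact ⟨pt n w i, ⟨mem_chainOf.2 ⟨i, hLS hi, rfl⟩, chainOf n v, isFacet_chainOf hv,
        ⟨v, w, hv, hw, rfl, rfl, Relation.TransGen.single hm⟩, inter_eq_sdiff_iff.2 hint⟩,
        card_pt hw (hLS hi)⟩
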